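/- Let u ∈ C²(closed 𝔻) be a solution of (P_ε). Then the following Kazdan–Warner type identity holds: ∫_{∂𝔻} [ 4x₂ ∂_τh_ε(x) e^{u/2} − 2x₁(h̃_ε − 1)u ] = ∫_𝔻 [ 4x₁ K̃_ε u + e^{u} ∇K_ε(x)·F(x) ], where F(x₁,x₂) = (1 − x₁² + x₂², −2x₁x₂). -/

import Mathlib

open MeasureTheory Real Filter

noncomputable section

/-- The open unit disk in ℝ² ≅ ℂ. -/
def unitDisk : Set ℂ := Metric.ball 0 1

/-- The unit circle ∂𝔻. -/
def unitCircle : Set ℂ := Metric.sphere 0 1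

/-- The closed unit disk. -/
def closedUnitDisk : Set ℂ := Metric.closedBall 0 1

/-- Directional derivative of `u` at `x` in direction `v`. -/
def pd (u : ℂ → ℝ) (v x : ℂ) : ℝ := fderiv ℝ u x v

/-- Laplacian of `u` at `x`. -/
def lap (u : ℂ → ℝ) (x : ℂ) : ℝ :=
  fderiv ℝ (fun y => pd u 1 y) x 1 + fderiv ℝ (fun y => pd u Complex.I y) x Complex.I

/-- Squared norm of the gradient, |∇u|². -/
def gradSq (u : ℂ → ℝ) (x : ℂ) : ℝ := pd u 1 x ^ 2 + pd u Complex.I x ^ 2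

/-- Outward normal derivative ∂_ν u(x) = ∇u(x)·x at a boundary point. -/
def nderiv (u : ℂ → ℝ) (x : ℂ) : ℝ := x.re * pd u 1 x + x.im * pd u Complex.I x

/-- Tangential derivative ∂_τ u(x) = ∇u(x)·(−x₂,x₁) at a boundary point. -/
def tderiv (u : ℂ → ℝ) (x : ℂ) : ℝ := -x.im * pd u 1 x + x.re * pd u Complex.I x

/-- Unit-speed parametrization of the unit circle. -/
def bpt (θ : ℝ) : ℂ := Complex.exp ((θ : ℂ) * Complex.I)

/-- Integral over ∂𝔻 with respect to arclength. -/
def bint (f : ℂ → ℝ) : ℝ := ∫ θ in (0:ℝ)..(2 * π), f (bpt θ)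

/-- A solution of the prescribed curvature problem for `(K, h)`. -/
def IsSolution (K h u : ℂ → ℝ) : Prop :=
  ContDiff ℝ 2 u ∧
  (∀ x ∈ unitDisk, -lap u x = 2 * K x * Real.exp (u x)) ∧
  (∀ x ∈ unitCircle, nderiv u x + 2 = 2 * h x * Real.exp (u x / 2))

/-- The auxiliary function Φ = H + √(H² + K). -/
def Phi (K H : ℂ → ℝ) (x : ℂ) : ℝ := H x + Real.sqrt (H x ^ 2 + K x)

/-- `H` is the harmonic extension of `h`, C¹ up to the boundary. -/
def IsHarmExt (h H : ℂ → ℝ) : Prop :=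
  ContDiff ℝ 1 H ∧ ContDiffOn ℝ 2 H unitDisk ∧
  (∀ x ∈ unitDisk, lap H x = 0) ∧ ∀ x ∈ unitCircle, H x = h x

/-- K_ε. -/
def Keps (K : ℂ → ℝ) (ε : ℝ) (x : ℂ) : ℝ := (K x - ε / 2) / (1 + ε)

/-- h_ε. -/
def heps (h : ℂ → ℝ) (ε : ℝ) (x : ℂ) : ℝ := h x / (1 + ε)

/-- K̃_ε. -/
def Ktil (ε : ℝ) : ℝ := -ε / (2 * (1 + ε))

/-- h̃_ε. -/
def htil (ε : ℝ) : ℝ := 1 / (1 + ε)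

/-- A solution of the perturbed problem (P_ε). -/
def IsPerturbedSolution (K h : ℂ → ℝ) (ε : ℝ) (u : ℂ → ℝ) : Prop :=
  ContDiff ℝ 2 u ∧
  (∀ x ∈ unitDisk, -lap u x + 2 * Ktil ε = 2 * Keps K ε x * Real.exp (u x)) ∧
  (∀ x ∈ unitCircle, nderiv u x + 2 * htil ε = 2 * heps h ε x * Real.exp (u x / 2))

/-- The energy functional I. -/
def Ifun (K h u : ℂ → ℝ) : ℝ :=
  (∫ x in unitDisk, ((1/2) * gradSq u x - 2 * K x * Real.exp (u x))) +
  bint (fun x => 2 * u x - 4 * h x * Real.exp (u x / 2))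

/-- The perturbation term T. -/
def Tfun (u : ℂ → ℝ) : ℝ :=
  ∫ x in unitDisk, ((1/2) * gradSq u x + Real.exp (u x) - u x)

/-- The perturbed functional I_ε. -/
def Ieps (K h : ℂ → ℝ) (ε : ℝ) (u : ℂ → ℝ) : ℝ := (Ifun K h u + ε * Tfun u) / (1 + ε)

/-!
Identify `ℝ²` with `ℂ`. The vector field `F = 1 - z²` is holomorphic and tangent to the unit
circle, where `F = -2x₂ τ`. Stokes' theorem for `F (∂u/∂z)²` expresses `∫ Δu ∇u·F` through
`∮ x₂ ∂_ν u ∂_τ u`. On the other hand the equation gives `Δu ∇u = ∇m + 2eᵘ ∇K_ε` with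
`m = 2K̃_ε (u + 1) - 2K_ε eᵘ`, and since `F` is tangent and `div F = -4x₁`, integrating `∇m·F` by
parts leaves a multiple of `∫ x₁ m`, that is, `∫ x₁ u` and `∫ x₁ Δu`; Green's second identity
with the harmonic function `x₁` moves the latter to the boundary. Inserting the boundary
condition for `∂_ν u`, the boundary integrals agree after one integration by parts on the circle.
-/

open Complex (I)
open scoped ComplexConjugate

section PolarCoordinates

variable {E : Type*} [NormedAddCommGroup E] [NormedSpace ℝ E]

lemma integrableOn_comp_polarCoord_symm_iff (f : ℝ × ℝ → E) :
    IntegrableOn (fun p ↦ p.1 • f (polarCoord.symm p)) polarCoord.target ↔ Integrable f := by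
  rw [← integrableOn_univ, ← integrableOn_congr_set_ae polarCoord_source_ae_eq_univ,
    ← polarCoord.symm_image_target_eq_source,
    integrableOn_image_iff_integrableOn_abs_det_fderiv_smul volume
      polarCoord.open_target.measurableSet
      (fun p _ ↦ (hasFDerivAt_polarCoord_symm p).hasFDerivWithinAt) polarCoord.symm.injOn]
  refine integrableOn_congr_fun (fun p hp ↦ ?_) polarCoord.open_target.measurableSet
  rw [det_fderivPolarCoordSymm, abs_of_pos hp.1]

lemma integrableOn_comp_complex_polarCoord_symm_iff (f : ℂ → E) :
    IntegrableOn (fun p ↦ p.1 • f (Complex.polarCoord.symm p)) polarCoord.target ↔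
      Integrable f := by
  rw [← Complex.volume_preserving_equiv_real_prod.symm.integrable_comp_emb
    Complex.measurableEquivRealProd.symm.measurableEmbedding,
    ← integrableOn_comp_polarCoord_symm_iff]
  rfl

lemma complex_polarCoord_symm_eq_circleMap (p : ℝ × ℝ) :
    Complex.polarCoord.symm p = circleMap 0 p.1 p.2 := by
  rw [Complex.polarCoord_symm_apply, circleMap_zero, Complex.exp_mul_I, Complex.ofReal_cos,
    Complex.ofReal_sin]

lemma circleMap_mem_ball_iff {c : ℂ} {r R θ : ℝ} (hr : 0 < r) :
    circleMap c r θ ∈ Metric.ball c R ↔ r < R := by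
  rw [mem_ball_iff_norm, circleMap_sub_center, norm_circleMap_zero, abs_of_pos hr]

lemma mapsTo_circleMap_closedBall (c : ℂ) (R : ℝ) :
    Set.MapsTo (fun p : ℝ × ℝ ↦ circleMap c p.1 p.2) (Set.Icc (0, -π) (R, π))
      (Metric.closedBall c R) := fun p hp ↦
  Metric.closedBall_subset_closedBall hp.2.1 (circleMap_mem_closedBall c hp.1.1 p.2)

lemma Ioo_prod_Ioo_ae_eq_Icc (a b : ℝ × ℝ) :
    (Set.Ioo a.1 b.1 ×ˢ Set.Ioo a.2 b.2 : Set (ℝ × ℝ)) =ᵐ[volume] Set.Icc a b := by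
  rw [← Prod.mk.eta (p := a), ← Prod.mk.eta (p := b), ← Set.Icc_prod_Icc]
  exact Measure.set_prod_ae_eq Ioo_ae_eq_Icc Ioo_ae_eq_Icc

lemma polarCoord_target_inter_fst_lt_ae_eq_Icc (R : ℝ) :
    (polarCoord.target ∩ {p | p.1 < R} : Set (ℝ × ℝ)) =ᵐ[volume] Set.Icc (0, -π) (R, π) := by
  have hprod : polarCoord.target ∩ {p | p.1 < R} = Set.Ioo 0 R ×ˢ Set.Ioo (-π) π := by
    ext p
    simp only [polarCoord_target, Set.mem_inter_iff, Set.mem_prod, Set.mem_Ioi, Set.mem_Ioo,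
      Set.mem_ofPred_eq]
    tauto
  rw [hprod]
  exact Ioo_prod_Ioo_ae_eq_Icc (0, -π) (R, π)

lemma smul_indicator_ball_comp_polar (c : ℂ) (R : ℝ) (f : ℂ → E) :
    Set.EqOn
      (fun p ↦ p.1 • (Metric.ball c R).indicator f (c + Complex.polarCoord.symm p))
      ({p | p.1 < R}.indicator fun p ↦ p.1 • f (circleMap c p.1 p.2)) polarCoord.target := by
  intro p hp
  have hmem : circleMap c p.1 p.2 ∈ Metric.ball c R ↔ p ∈ {p : ℝ × ℝ | p.1 < R} :=
    circleMap_mem_ball_iff hp.1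
  have hmap : c + Complex.polarCoord.symm p = circleMap c p.1 p.2 := by
    rw [complex_polarCoord_symm_eq_circleMap, ← circleMap_sub_center, add_sub_cancel]
  by_cases hR : p ∈ {p : ℝ × ℝ | p.1 < R}
  · simp only [hmap, Set.indicator_of_mem hR, Set.indicator_of_mem (hmem.2 hR)]
  · simp only [hmap, Set.indicator_of_notMem hR, Set.indicator_of_notMem (mt hmem.1 hR),
      smul_zero]

lemma setIntegral_ball_eq_polar (c : ℂ) (R : ℝ) (f : ℂ → E) :
    ∫ z in Metric.ball c R, f z =
      ∫ p in Set.Icc ((0 : ℝ), -π) (R, π), p.1 • f (circleMap c p.1 p.2) := by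
  rw [← integral_indicator measurableSet_ball, ← integral_add_left_eq_self _ c,
    ← Complex.integral_comp_polarCoord_symm,
    setIntegral_congr_fun polarCoord.open_target.measurableSet
      (smul_indicator_ball_comp_polar c R f),
    setIntegral_indicator (measurableSet_lt measurable_fst measurable_const),
    setIntegral_congr_set (polarCoord_target_inter_fst_lt_ae_eq_Icc R)]

lemma integrableOn_ball_iff_polar (c : ℂ) (R : ℝ) (f : ℂ → E) :
    IntegrableOn f (Metric.ball c R) ↔
      IntegrableOn (fun p : ℝ × ℝ ↦ p.1 • f (circleMap c p.1 p.2))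
        (Set.Icc ((0 : ℝ), -π) (R, π)) := by
  have hmeas : MeasurableSet {p : ℝ × ℝ | p.1 < R} :=
    measurableSet_lt measurable_fst measurable_const
  rw [← integrable_indicator_iff measurableSet_ball,
    ← (measurePreserving_add_left volume c).integrable_comp_emb
      (measurableEmbedding_addLeft c),
    ← integrableOn_comp_complex_polarCoord_symm_iff]
  simp only [Function.comp_apply]
  rw [integrableOn_congr_fun (smul_indicator_ball_comp_polar c R f)
      polarCoord.open_target.measurableSet,
    IntegrableOn, integrable_indicator_iff hmeas, IntegrableOn, Measure.restrict_restrict hmeas,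
    Set.inter_comm, ← IntegrableOn,
    integrableOn_congr_set_ae (polarCoord_target_inter_fst_lt_ae_eq_Icc R)]

end PolarCoordinates

section Green

variable {E : Type*} [NormedAddCommGroup E] [NormedSpace ℂ E]

/-- Twice the Wirtinger derivative `∂f/∂z̄`. The factor `2` makes the real part of `dbar f` the
divergence of the planar vector field `conj f`. -/
def dbar (f : ℂ → E) (z : ℂ) : E := fderiv ℝ f z 1 + I • fderiv ℝ f z I

lemma map_add_I_smul_map_I_mul (L : ℂ →L[ℝ] E) (w : ℂ) :
    L w + I • L (I * w) = conj w • (L 1 + I • L I) := by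
  have hw : w = w.re • (1 : ℂ) + w.im • I := by simp
  have hIw : I * w = -w.im • (1 : ℂ) + w.re • I := by
    apply Complex.ext <;> simp
  have hconj : conj w = w.re - w.im * I := by
    apply Complex.ext <;> simp
  have hLw : L w = (w.re : ℂ) • L 1 + (w.im : ℂ) • L I := by
    rw [Complex.coe_smul, Complex.coe_smul, ← map_smul, ← map_smul, ← map_add, ← hw]
  have hLIw : L (I * w) = -(w.im : ℂ) • L 1 + (w.re : ℂ) • L I := by
    rw [← Complex.ofReal_neg, Complex.coe_smul, Complex.coe_smul, ← map_smul, ← map_smul,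
      ← map_add, ← hIw]
  rw [hLw, hLIw, hconj]
  match_scalars
  · ring
  · linear_combination (w.im : ℂ) * Complex.I_mul_I

lemma dbar_eq_smul_of_norm_eq_one (f : ℂ → E) (z : ℂ) {w : ℂ} (hw : ‖w‖ = 1) :
    dbar f z = w • (fderiv ℝ f z w + I • fderiv ℝ f z (I * w)) := by
  have hunit : w * conj w = 1 := by simp [Complex.mul_conj', hw]
  rw [map_add_I_smul_map_I_mul, smul_smul, hunit, one_smul, dbar]

lemma fderiv_apply_one_zero {f : ℝ × ℝ → E} {a b : ℝ} {d : E}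
    (hf : DifferentiableAt ℝ f (a, b)) (hd : HasDerivAt (fun x ↦ f (x, b)) d a) :
    fderiv ℝ f (a, b) (1, 0) = d :=
  (hf.hasFDerivAt.comp_hasDerivAt a
    ((hasDerivAt_id a).prodMk (hasDerivAt_const a b))).unique hd

lemma fderiv_apply_zero_one {f : ℝ × ℝ → E} {a b : ℝ} {d : E}
    (hf : DifferentiableAt ℝ f (a, b)) (hd : HasDerivAt (fun y ↦ f (a, y)) d b) :
    fderiv ℝ f (a, b) (0, 1) = d :=
  (hf.hasFDerivAt.comp_hasDerivAt b
    ((hasDerivAt_const b a).prodMk (hasDerivAt_id b))).unique hd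

lemma hasDerivAt_circleMap_radius (c : ℂ) (r θ : ℝ) :
    HasDerivAt (fun r : ℝ ↦ circleMap c r θ) (circleMap 0 1 θ) r := by
  simpa [circleMap] using
    ((hasDerivAt_id (r : ℂ)).comp_ofReal.mul_const (Complex.exp (θ * I))).const_add c

lemma differentiable_circleMap_prod (c : ℂ) :
    Differentiable ℝ fun p : ℝ × ℝ ↦ circleMap c p.1 p.2 := by
  unfold circleMap
  fun_prop

/-- The coefficient of `dθ` in the pullback of the `1`-form `f dz` along
`(r, θ) ↦ c + r e^{iθ}`. -/
def pullbackAngular (c : ℂ) (f : ℂ → E) (p : ℝ × ℝ) : E :=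
  (circleMap 0 p.1 p.2 * I) • f (circleMap c p.1 p.2)

/-- The coefficient of `dr` in the pullback of the `1`-form `f dz` along
`(r, θ) ↦ c + r e^{iθ}`. -/
def pullbackRadial (c : ℂ) (f : ℂ → E) (p : ℝ × ℝ) : E :=
  circleMap 0 1 p.2 • f (circleMap c p.1 p.2)

lemma differentiableAt_pullbackAngular {c : ℂ} {f : ℂ → E} {p : ℝ × ℝ}
    (hf : DifferentiableAt ℝ f (circleMap c p.1 p.2)) :
    DifferentiableAt ℝ (pullbackAngular c f) p :=
  ((differentiable_circleMap_prod 0 p).mul_const I).smul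
    (hf.comp p (differentiable_circleMap_prod c p))

lemma differentiableAt_pullbackRadial {c : ℂ} {f : ℂ → E} {p : ℝ × ℝ}
    (hf : DifferentiableAt ℝ f (circleMap c p.1 p.2)) :
    DifferentiableAt ℝ (pullbackRadial c f) p :=
  ((differentiable_circleMap 0 1 p.2).comp p differentiableAt_snd).smul
    (hf.comp p (differentiable_circleMap_prod c p))

lemma fderiv_pullback_sub {c : ℂ} {f : ℂ → E} {p : ℝ × ℝ}
    (hf : DifferentiableAt ℝ f (circleMap c p.1 p.2)) :
    fderiv ℝ (pullbackAngular c f) p (1, 0) - fderiv ℝ (pullbackRadial c f) p (0, 1) =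
      I • p.1 • dbar f (circleMap c p.1 p.2) := by
  obtain ⟨r, θ⟩ := p
  set L := fderiv ℝ f (circleMap c r θ) with hL
  set e := circleMap 0 1 θ with he
  have hre : circleMap 0 r θ = r * e := by simp [he, circleMap_zero]
  have hreal : L (r * e * I) = (r : ℂ) • L (I * e) := by
    rw [Complex.coe_smul, ← map_smul, Complex.real_smul, mul_assoc, mul_comm e]
  have hr := ((hasDerivAt_circleMap_radius 0 r θ).mul_const I).smul
    (hf.hasFDerivAt.comp_hasDerivAt r (hasDerivAt_circleMap_radius c r θ))
  have hθ := (hasDerivAt_circleMap 0 1 θ).smul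
    (hf.hasFDerivAt.comp_hasDerivAt θ (hasDerivAt_circleMap c r θ))
  rw [fderiv_apply_one_zero (differentiableAt_pullbackAngular hf) hr,
    fderiv_apply_zero_one (differentiableAt_pullbackRadial hf) hθ,
    dbar_eq_smul_of_norm_eq_one f _ (w := e) (by simp [he])]
  simp only [← he, ← hL, hre, hreal, ← Complex.coe_smul, Function.comp_apply]
  match_scalars
  · ring
  · ring
  · linear_combination (-(r : ℂ) * e) * Complex.I_mul_I

lemma differentiableAt_circleMap_of_mem {c : ℂ} {R : ℝ} {f : ℂ → E}
    (hd : DifferentiableOn ℝ f (Metric.ball c R)) {p : ℝ × ℝ}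
    (hp : p ∈ Set.Ioo 0 R ×ˢ Set.Ioo (-π) π) :
    DifferentiableAt ℝ f (circleMap c p.1 p.2) :=
  hd.differentiableAt (Metric.isOpen_ball.mem_nhds ((circleMap_mem_ball_iff hp.1.1).2 hp.1.2))

lemma fderiv_pullback_sub_ae_eq {c : ℂ} {R : ℝ} {f : ℂ → E}
    (hd : DifferentiableOn ℝ f (Metric.ball c R)) :
    (fun p ↦ fderiv ℝ (pullbackAngular c f) p (1, 0) - fderiv ℝ (pullbackRadial c f) p (0, 1))
      =ᵐ[volume.restrict (Set.Icc (0, -π) (R, π))]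
        fun p ↦ I • p.1 • dbar f (circleMap c p.1 p.2) := by
  rw [← Measure.restrict_congr_set (Ioo_prod_Ioo_ae_eq_Icc (0, -π) (R, π))]
  exact (ae_restrict_iff' (measurableSet_Ioo.prod measurableSet_Ioo)).2 <|
    .of_forall fun p hp ↦ fderiv_pullback_sub (differentiableAt_circleMap_of_mem hd hp)

lemma circleIntegral_eq_integral_pullbackAngular (c : ℂ) (R : ℝ) (f : ℂ → E) :
    (∮ z in C(c, R), f z) = ∫ θ in (-π)..π, pullbackAngular c f (R, θ) := by
  have hper : Function.Periodic (fun θ ↦ pullbackAngular c f (R, θ)) (2 * π) := fun θ ↦ by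
    simp only [pullbackAngular, periodic_circleMap _ R θ]
  have hshift := hper.intervalIntegral_add_eq 0 (-π)
  rw [zero_add, show -π + 2 * π = π by ring] at hshift
  rw [← hshift]
  simp only [circleIntegral, deriv_circleMap, pullbackAngular]

theorem circleIntegral_eq_I_smul_integral_dbar [CompleteSpace E] {c : ℂ} {R : ℝ} (hR : 0 ≤ R)
    {f : ℂ → E} (hc : ContinuousOn f (Metric.closedBall c R))
    (hd : DifferentiableOn ℝ f (Metric.ball c R))
    (hi : IntegrableOn (dbar f) (Metric.ball c R)) :
    (∮ z in C(c, R), f z) = I • ∫ z in Metric.ball c R, dbar f z := by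
  have hcont : ContinuousOn (fun p : ℝ × ℝ ↦ f (circleMap c p.1 p.2))
      (Set.Icc (0, -π) (R, π)) :=
    hc.comp (differentiable_circleMap_prod c).continuous.continuousOn
      (mapsTo_circleMap_closedBall c R)
  have hang : ContinuousOn (pullbackAngular c f) (Set.Icc (0, -π) (R, π)) :=
    ((differentiable_circleMap_prod 0).continuous.mul continuous_const).continuousOn.smul hcont
  have hrad : ContinuousOn (pullbackRadial c f) (Set.Icc (0, -π) (R, π)) :=
    ((continuous_circleMap 0 1).comp continuous_snd).continuousOn.smul hcont
  have hint := ((integrableOn_ball_iff_polar c R _).1 hi).smul I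
  have hstokes := integral_divergence_prod_Icc_of_hasFDerivAt_of_le
    (pullbackAngular c f) (fun p ↦ -pullbackRadial c f p) (fderiv ℝ (pullbackAngular c f))
    (fun p ↦ -fderiv ℝ (pullbackRadial c f) p) (0, -π) (R, π)
    ⟨hR, neg_le_self pi_pos.le⟩ hang hrad.neg
    (fun p hp ↦ (differentiableAt_pullbackAngular
      (differentiableAt_circleMap_of_mem hd hp)).hasFDerivAt)
    (fun p hp ↦ (differentiableAt_pullbackRadial
      (differentiableAt_circleMap_of_mem hd hp)).hasFDerivAt.neg)
  simp only [neg_apply, ← sub_eq_add_neg] at hstokes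
  have hsides : ∀ r, pullbackRadial c f (r, π) = pullbackRadial c f (r, -π) := fun r ↦ by
    simp [pullbackRadial, circleMap, Complex.exp_neg]
  have hcenter : ∀ θ, pullbackAngular c f (0, θ) = 0 := fun θ ↦ by simp [pullbackAngular]
  rw [circleIntegral_eq_integral_pullbackAngular, setIntegral_ball_eq_polar, ← integral_smul,
    ← integral_congr_ae (fderiv_pullback_sub_ae_eq hd),
    hstokes (hint.congr (fderiv_pullback_sub_ae_eq hd).symm)]
  simp [hsides, hcenter]

end Green

section Wirtinger

variable {E : Type*} [NormedAddCommGroup E] [NormedSpace ℂ E] {f g : ℂ → ℂ} {u : ℂ → ℝ} {z : ℂ}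

/-- Twice the Wirtinger derivative `∂u/∂z` of a real function, that is, the complex conjugate of
the gradient of `u`. -/
def dz (u : ℂ → ℝ) (z : ℂ) : ℂ := pd u 1 z - pd u I z * I

lemma re_mul_dz (u : ℂ → ℝ) (z v : ℂ) : (v * dz u z).re = fderiv ℝ u z v := by
  have hv : fderiv ℝ u z v = fderiv ℝ u z (v.re • (1 : ℂ) + v.im • I) := by simp
  rw [hv, map_add, map_smul, map_smul]
  simp [dz, pd]

lemma mul_dz_eq_nderiv_sub_tderiv (u : ℂ → ℝ) (z : ℂ) :
    z * dz u z = nderiv u z - tderiv u z * I := by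
  apply Complex.ext <;> simp [dz, nderiv, tderiv]

lemma tderiv_eq_fderiv (u : ℂ → ℝ) (z : ℂ) : tderiv u z = fderiv ℝ u z (z * I) := by
  rw [← re_mul_dz, mul_right_comm, mul_dz_eq_nderiv_sub_tderiv]
  simp

lemma continuous_dbar {f : ℂ → E} (hf : ContDiff ℝ 1 f) : Continuous (dbar f) := by
  unfold dbar
  fun_prop

lemma dbar_sub {f g : ℂ → E} (hf : DifferentiableAt ℝ f z) (hg : DifferentiableAt ℝ g z) :
    dbar (fun w ↦ f w - g w) z = dbar f z - dbar g z := by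
  simp only [dbar, fderiv_fun_sub hf hg, sub_apply, smul_sub]
  abel

lemma dbar_mul (hf : DifferentiableAt ℝ f z) (hg : DifferentiableAt ℝ g z) :
    dbar (fun w ↦ f w * g w) z = f z * dbar g z + dbar f z * g z := by
  simp only [dbar, fderiv_fun_mul hf hg, add_apply, smul_apply, smul_eq_mul]
  ring

lemma dbar_eq_zero {f : ℂ → E} (hf : DifferentiableAt ℂ f z) : dbar f z = 0 := by
  have hI : fderiv ℂ f z I = I • fderiv ℂ f z 1 := by
    rw [← map_smul, smul_eq_mul, mul_one]
  simp [dbar, hf.fderiv_restrictScalars ℝ, hI, smul_smul]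

lemma dbar_conj_comp (hf : DifferentiableAt ℂ f z) :
    dbar (fun w ↦ conj (f w)) z = 2 * conj (deriv f z) := by
  have hconj : ∀ v, fderiv ℝ (fun w ↦ conj (f w)) z v = conj (v * deriv f z) := fun v ↦ by
    have hstar := (hf.hasFDerivAt.restrictScalars ℝ).star.fderiv
    rw [← smul_eq_mul, ← fderiv_eq_smul_deriv]
    exact DFunLike.congr_fun hstar v
  simp only [dbar, hconj, map_mul, Complex.conj_I, smul_eq_mul, map_one]
  linear_combination (-conj (deriv f z)) * Complex.I_mul_I

lemma dbar_ofReal_comp (hu : DifferentiableAt ℝ u z) :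
    dbar (fun w ↦ (u w : ℂ)) z = conj (dz u z) := by
  have hcoe : ∀ v, fderiv ℝ (fun w ↦ (u w : ℂ)) z v = pd u v z := fun v ↦
    DFunLike.congr_fun (Complex.ofRealCLM.hasFDerivAt.comp z hu.hasFDerivAt).fderiv v
  simp only [dbar, hcoe, smul_eq_mul, dz, map_sub, map_mul, Complex.conj_ofReal, Complex.conj_I]
  ring

lemma contDiff_pd {n : ℕ} (hu : ContDiff ℝ (n + 1) u) (v : ℂ) : ContDiff ℝ n (pd u v) :=
  (hu.fderiv_right le_rfl).clm_apply contDiff_const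

lemma contDiff_dz {n : ℕ} (hu : ContDiff ℝ (n + 1) u) : ContDiff ℝ n (dz u) :=
  (Complex.ofRealCLM.contDiff.comp (contDiff_pd hu 1)).sub
    ((Complex.ofRealCLM.contDiff.comp (contDiff_pd hu I)).mul contDiff_const)

lemma continuous_lap (hu : ContDiff ℝ 2 u) : Continuous (lap u) :=
  ((contDiff_pd (n := 0) (contDiff_pd (n := 1) hu 1) 1).add
    (contDiff_pd (n := 0) (contDiff_pd (n := 1) hu I) I)).continuous

lemma pd_pd_comm (hu : ContDiff ℝ 2 u) (v w z : ℂ) : pd (pd u v) w z = pd (pd u w) v z := by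
  have hpd : ∀ a b, pd (pd u a) b z = fderiv ℝ (fderiv ℝ u) z b a := fun a b ↦ by
    have hdiff := (hu.fderiv_right (m := 1) le_rfl).differentiable one_ne_zero z
    change fderiv ℝ (fun y ↦ fderiv ℝ u y a) z b = _
    rw [fderiv_clm_apply hdiff (differentiableAt_const a)]
    simp
  rw [hpd, hpd]
  exact hu.contDiffAt.isSymmSndFDerivAt (by simp) w v

lemma dbar_dz (hu : ContDiff ℝ 2 u) (z : ℂ) : dbar (dz u) z = lap u z := by
  have hdiff : ∀ v, DifferentiableAt ℝ (pd u v) z := fun v ↦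
    (contDiff_pd (n := 1) hu v).differentiable one_ne_zero z
  have hcoe : ∀ v, DifferentiableAt ℝ (fun w ↦ (pd u v w : ℂ)) z := fun v ↦
    Complex.ofRealCLM.differentiableAt.comp z (hdiff v)
  have hlap : lap u z = pd (pd u 1) 1 z + pd (pd u I) I z := rfl
  unfold dz
  rw [dbar_sub (hcoe 1) ((hcoe I).mul_const I), dbar_mul (hcoe I) (differentiableAt_const I),
    dbar_eq_zero (differentiableAt_const I), dbar_ofReal_comp (hdiff 1),
    dbar_ofReal_comp (hdiff I), hlap, dz, dz, pd_pd_comm hu 1 I]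
  simp only [map_sub, map_mul, Complex.conj_ofReal, Complex.conj_I, Complex.ofReal_add]
  linear_combination (-(pd (pd u I) I z : ℂ)) * Complex.I_mul_I

end Wirtinger

section UnitDisk

variable {u : ℂ → ℝ}

lemma bpt_eq_circleMap (θ : ℝ) : bpt θ = circleMap 0 1 θ := by
  simp [bpt, circleMap_zero]

lemma bpt_re (θ : ℝ) : (bpt θ).re = cos θ := Complex.exp_ofReal_mul_I_re θ

lemma bpt_im (θ : ℝ) : (bpt θ).im = sin θ := Complex.exp_ofReal_mul_I_im θ

lemma bpt_mem_unitCircle (θ : ℝ) : bpt θ ∈ unitCircle := by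
  simp [unitCircle, bpt]

lemma contDiff_bpt {n : WithTop ℕ∞} : ContDiff ℝ n bpt := by
  simpa only [funext bpt_eq_circleMap] using contDiff_circleMap 0 1

lemma continuous_bpt : Continuous bpt := (contDiff_bpt (n := 0)).continuous

lemma hasDerivAt_comp_bpt {θ : ℝ} (hu : DifferentiableAt ℝ u (bpt θ)) :
    HasDerivAt (fun t ↦ u (bpt t)) (tderiv u (bpt θ)) θ := by
  have hbpt : HasDerivAt bpt (bpt θ * I) θ := by
    simpa only [funext bpt_eq_circleMap] using hasDerivAt_circleMap 0 1 θ
  rw [tderiv_eq_fderiv]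
  exact hu.hasFDerivAt.comp_hasDerivAt θ hbpt

lemma bint_congr {f g : ℂ → ℝ} (hfg : Set.EqOn f g unitCircle) : bint f = bint g :=
  intervalIntegral.integral_congr fun θ _ ↦ hfg (bpt_mem_unitCircle θ)

lemma conj_mul_self_of_mem_unitCircle {z : ℂ} (hz : z ∈ unitCircle) : conj z * z = 1 := by
  have hnorm : ‖z‖ = 1 := by simpa [unitCircle] using hz
  simp [Complex.conj_mul', hnorm]

lemma integrableOn_unitDisk {E : Type*} [NormedAddCommGroup E] {f : ℂ → E} (hf : Continuous f) :
    IntegrableOn f unitDisk :=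
  (hf.continuousOn.integrableOn_compact (isCompact_closedBall 0 1)).mono_set
    Metric.ball_subset_closedBall

theorem integral_dbar_re_eq_bint {f : ℂ → ℂ} (hf : ContDiff ℝ 1 f) :
    ∫ z in unitDisk, (dbar f z).re = bint fun z ↦ (z * f z).re := by
  have hint : IntegrableOn (dbar f) unitDisk := integrableOn_unitDisk (continuous_dbar hf)
  have hbdry : Continuous fun θ ↦ bpt θ * f (bpt θ) :=
    continuous_bpt.mul (hf.continuous.comp continuous_bpt)
  have hgreen := circleIntegral_eq_I_smul_integral_dbar zero_le_one hf.continuous.continuousOn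
    (hf.differentiable one_ne_zero).differentiableOn hint
  have hcircle : (∮ z in C(0, 1), f z) = I • ∫ θ in (0 : ℝ)..2 * π, bpt θ * f (bpt θ) := by
    rw [circleIntegral, ← intervalIntegral.integral_smul]
    simp only [deriv_circleMap, bpt_eq_circleMap, smul_eq_mul]
    congr! 2
    ring
  have hflux : ∫ z in unitDisk, dbar f z = ∫ θ in (0 : ℝ)..2 * π, bpt θ * f (bpt θ) :=
    (smul_right_injective ℂ Complex.I_ne_zero (hcircle.symm.trans hgreen)).symm
  calc ∫ z in unitDisk, (dbar f z).re = (∫ z in unitDisk, dbar f z).re := integral_re hint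
    _ = (∫ θ in (0 : ℝ)..2 * π, bpt θ * f (bpt θ)).re := by rw [hflux]
    _ = bint fun z ↦ (z * f z).re :=
      (Complex.reCLM.intervalIntegral_comp_comm (hbdry.intervalIntegrable _ _)).symm

end UnitDisk

section IntegralIdentities

variable {u φ : ℂ → ℝ} {F : ℂ → ℂ}

theorem integral_mul_lap_sub_mul_lap (hφ : ContDiff ℝ 2 φ) (hu : ContDiff ℝ 2 u) :
    ∫ z in unitDisk, (φ z * lap u z - u z * lap φ z) =
      bint fun z ↦ φ z * nderiv u z - u z * nderiv φ z := by
  have hcoe : ∀ {v : ℂ → ℝ}, ContDiff ℝ 2 v → ContDiff ℝ 1 fun z ↦ (v z : ℂ) := fun hv ↦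
    Complex.ofRealCLM.contDiff.comp (hv.of_le one_le_two)
  have hφu := (hcoe hφ).mul (contDiff_dz (n := 1) hu)
  have huφ := (hcoe hu).mul (contDiff_dz (n := 1) hφ)
  have hdbar : ∀ {v w : ℂ → ℝ}, ContDiff ℝ 2 v → ContDiff ℝ 2 w → ∀ z,
      dbar (fun z ↦ v z * dz w z) z = v z * lap w z + conj (dz v z) * dz w z := fun hv hw z ↦ by
    rw [dbar_mul ((hcoe hv).differentiable one_ne_zero z)
      ((contDiff_dz (n := 1) hw).differentiable one_ne_zero z), dbar_dz hw,
      dbar_ofReal_comp (hv.differentiable two_ne_zero z)]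
  have hinterior : ∀ z, (dbar (fun z ↦ φ z * dz u z - u z * dz φ z) z).re =
      φ z * lap u z - u z * lap φ z := fun z ↦ by
    rw [dbar_sub (hφu.differentiable one_ne_zero z) (huφ.differentiable one_ne_zero z),
      hdbar hφ hu, hdbar hu hφ]
    simp only [Complex.sub_re, Complex.add_re, Complex.mul_re, Complex.ofReal_re,
      Complex.ofReal_im, Complex.conj_re, Complex.conj_im]
    ring
  have hboundary : ∀ z, (z * (φ z * dz u z - u z * dz φ z)).re =
      φ z * nderiv u z - u z * nderiv φ z := fun z ↦ by
    rw [mul_sub, mul_left_comm, mul_left_comm z, mul_dz_eq_nderiv_sub_tderiv,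
      mul_dz_eq_nderiv_sub_tderiv]
    simp
  simpa only [hinterior, hboundary] using integral_dbar_re_eq_bint (hφu.sub huφ)

lemma pd_re (v z : ℂ) : pd Complex.re v z = v.re :=
  DFunLike.congr_fun Complex.reCLM.fderiv v

lemma lap_re (z : ℂ) : lap Complex.re z = 0 := by
  simp [lap, pd_re]

lemma nderiv_re (z : ℂ) : nderiv Complex.re z = z.re := by
  simp [nderiv, pd_re]

theorem integral_re_mul_lap (hu : ContDiff ℝ 2 u) :
    ∫ z in unitDisk, z.re * lap u z = bint fun z ↦ z.re * nderiv u z - u z * z.re := by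
  simpa only [lap_re, nderiv_re, mul_zero, sub_zero] using
    integral_mul_lap_sub_mul_lap (φ := Complex.re) Complex.reCLM.contDiff hu

theorem integral_fderiv_add_mul_re_deriv_eq_zero (hF : Differentiable ℂ F)
    (htangent : ∀ z ∈ unitCircle, (conj z * F z).re = 0) (hu : ContDiff ℝ 1 u) :
    ∫ z in unitDisk, (fderiv ℝ u z (F z) + 2 * u z * (deriv F z).re) = 0 := by
  have hu' : ContDiff ℝ 1 fun z ↦ (u z : ℂ) := Complex.ofRealCLM.contDiff.comp hu
  have hF' : ContDiff ℝ 1 fun z ↦ conj (F z) :=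
    Complex.conjCLE.contDiff.comp (hF.contDiff.restrict_scalars ℝ)
  have hinterior : ∀ z, (dbar (fun z ↦ u z * conj (F z)) z).re =
      fderiv ℝ u z (F z) + 2 * u z * (deriv F z).re := fun z ↦ by
    rw [dbar_mul (hu'.differentiable one_ne_zero z) (hF'.differentiable one_ne_zero z),
      dbar_conj_comp (hF z), dbar_ofReal_comp (hu.differentiable one_ne_zero z), ← map_mul,
      mul_comm (dz u z), Complex.add_re, Complex.conj_re, re_mul_dz]
    simp only [← Complex.ofReal_ofNat, Complex.re_ofReal_mul, Complex.conj_re]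
    ring
  have hboundary : Set.EqOn (fun z ↦ (z * (u z * conj (F z))).re) 0 unitCircle := fun z hz ↦ by
    have hconj : z * (u z * conj (F z)) = u z * conj (conj z * F z) := by
      rw [map_mul, Complex.conj_conj]
      ring
    beta_reduce
    rw [hconj, Complex.re_ofReal_mul, Complex.conj_re, htangent z hz, mul_zero, Pi.zero_apply]
  have hflux := integral_dbar_re_eq_bint (hu'.mul hF')
  rw [bint_congr hboundary] at hflux
  simpa only [hinterior, bint, Pi.zero_apply, intervalIntegral.integral_zero] using hflux

-- Stokes' theorem for `F (dz u)²`: since `dbar F = 0`, its `dbar`-derivative is `2 F (dz u) Δu`.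
theorem integral_lap_mul_fderiv (hF : Differentiable ℂ F)
    (htangent : ∀ z ∈ unitCircle, (conj z * F z).re = 0) (hu : ContDiff ℝ 2 u) :
    ∫ z in unitDisk, lap u z * fderiv ℝ u z (F z) =
      bint fun z ↦ (conj z * F z).im * (nderiv u z * tderiv u z) := by
  have hdz : ContDiff ℝ 1 (dz u) := contDiff_dz (n := 1) hu
  have hF' : ContDiff ℝ 1 F := hF.contDiff.restrict_scalars ℝ
  have hinterior : ∀ z, (dbar (fun z ↦ F z * (dz u z * dz u z)) z).re =
      2 * (lap u z * fderiv ℝ u z (F z)) := fun z ↦ by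
    have hdiff := hdz.differentiable one_ne_zero z
    rw [dbar_mul (hF'.differentiable one_ne_zero z) (hdiff.fun_mul hdiff), dbar_mul hdiff hdiff,
      dbar_eq_zero (hF z), dbar_dz hu, ← re_mul_dz]
    simp only [zero_mul, add_zero, Complex.mul_re, Complex.add_re, Complex.add_im,
      Complex.mul_im, Complex.ofReal_re, Complex.ofReal_im]
    ring
  have hboundary : Set.EqOn (fun z ↦ (z * (F z * (dz u z * dz u z))).re)
      (fun z ↦ 2 * ((conj z * F z).im * (nderiv u z * tderiv u z))) unitCircle := fun z hz ↦ by
    have hsquare : z * (F z * (dz u z * dz u z)) =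
        (conj z * F z) * ((z * dz u z) * (z * dz u z)) := by
      linear_combination (-z * F z * dz u z * dz u z) * conj_mul_self_of_mem_unitCircle hz
    have hre := htangent z hz
    beta_reduce
    rw [hsquare, mul_dz_eq_nderiv_sub_tderiv, Complex.mul_re, hre]
    simp only [Complex.mul_re, Complex.mul_im, Complex.sub_re, Complex.sub_im, Complex.ofReal_re,
      Complex.ofReal_im, Complex.I_re, Complex.I_im]
    ring
  have hflux := integral_dbar_re_eq_bint (hF'.mul (hdz.mul hdz))
  rw [bint_congr hboundary] at hflux
  simp only [hinterior, bint, integral_const_mul, intervalIntegral.integral_const_mul] at hflux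
  exact mul_left_cancel₀ two_ne_zero hflux

end IntegralIdentities

section KazdanWarner

variable {k h u : ℂ → ℝ} {κ η : ℝ} {F : ℂ → ℂ}

lemma fderiv_const_mul_add_one_sub_mul_exp {z : ℂ} (hk : DifferentiableAt ℝ k z)
    (hu : DifferentiableAt ℝ u z) (v : ℂ) :
    fderiv ℝ (fun z ↦ 2 * κ * (u z + 1) - 2 * k z * exp (u z)) z v =
      (2 * κ - 2 * k z * exp (u z)) * fderiv ℝ u z v - 2 * exp (u z) * fderiv ℝ k z v := by
  have hm := ((hu.hasFDerivAt.add_const 1).const_mul (2 * κ)).fun_sub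
    ((hk.hasFDerivAt.const_mul 2).fun_mul hu.hasFDerivAt.exp)
  rw [hm.fderiv]
  simp only [sub_apply, add_apply, smul_apply, smul_eq_mul]
  ring

-- The equation turns `∇m`, for `m = 2κ(u + 1) - 2k eᵘ`, into `Δu ∇u - 2eᵘ ∇k`.
lemma two_mul_integral_exp_mul_fderiv_sub (hF : Differentiable ℂ F)
    (htangent : ∀ z ∈ unitCircle, (conj z * F z).re = 0) (hk : ContDiff ℝ 1 k)
    (hu : ContDiff ℝ 2 u) (heq : ∀ z ∈ unitDisk, -lap u z + 2 * κ = 2 * k z * exp (u z)) :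
    2 * ∫ z in unitDisk, (exp (u z) * fderiv ℝ k z (F z) - 2 * κ * u z * (deriv F z).re) =
      (∫ z in unitDisk, lap u z * fderiv ℝ u z (F z)) +
        2 * ∫ z in unitDisk, (deriv F z).re * lap u z := by
  set m : ℂ → ℝ := fun z ↦ 2 * κ * (u z + 1) - 2 * k z * exp (u z) with hm
  have hu₁ : ContDiff ℝ 1 u := hu.of_le one_le_two
  have hm₁ : ContDiff ℝ 1 m := by fun_prop
  have hpointwise : ∀ z ∈ unitDisk,
      2 * (exp (u z) * fderiv ℝ k z (F z) - 2 * κ * u z * (deriv F z).re) =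
        lap u z * fderiv ℝ u z (F z) + 2 * ((deriv F z).re * lap u z) -
          (fderiv ℝ m z (F z) + 2 * m z * (deriv F z).re) := fun z hz ↦ by
    rw [hm, fderiv_const_mul_add_one_sub_mul_exp (hk.differentiable one_ne_zero z)
      (hu₁.differentiable one_ne_zero z)]
    linear_combination (fderiv ℝ u z (F z) + 2 * (deriv F z).re) * heq z hz
  have hlap : Continuous (lap u) := continuous_lap hu
  have hF' : Continuous (deriv F) := (hF.contDiff (n := 1)).continuous_deriv_one
  have hFc : Continuous F := hF.continuous
  have hmc : Continuous m := hm₁.continuous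
  have hint₁ : IntegrableOn (fun z ↦ lap u z * fderiv ℝ u z (F z)) unitDisk :=
    integrableOn_unitDisk (by fun_prop)
  have hint₂ : IntegrableOn (fun z ↦ 2 * ((deriv F z).re * lap u z)) unitDisk :=
    integrableOn_unitDisk (by fun_prop)
  have hint₃ : IntegrableOn (fun z ↦ fderiv ℝ m z (F z) + 2 * m z * (deriv F z).re) unitDisk :=
    integrableOn_unitDisk (by fun_prop)
  rw [← integral_const_mul, setIntegral_congr_fun (s := unitDisk) measurableSet_ball hpointwise,
    integral_sub (hint₁.fun_add hint₂) hint₃,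
    integral_fderiv_add_mul_re_deriv_eq_zero hF htangent hm₁, sub_zero,
    integral_add hint₁ hint₂, integral_const_mul]

-- The two integrands differ by the derivative of `sin θ (4η (U + 2) - 8 H e^{U/2})`.
lemma integral_flux_sub_eq_two_mul_integral {H U : ℝ → ℝ} (hH : ContDiff ℝ 1 H)
    (hU : ContDiff ℝ 1 U) (η : ℝ) :
    (∫ θ in (0 : ℝ)..2 * π, -2 * sin θ * ((2 * H θ * exp (U θ / 2) - 2 * η) * deriv U θ)) -
      4 * (∫ θ in (0 : ℝ)..2 * π,
        (cos θ * (2 * H θ * exp (U θ / 2) - 2 * η) - U θ * cos θ)) =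
    2 * ∫ θ in (0 : ℝ)..2 * π,
      (4 * sin θ * deriv H θ * exp (U θ / 2) - 2 * cos θ * (η - 1) * U θ) := by
  have hHd : ∀ θ, HasDerivAt H (deriv H θ) θ := fun θ ↦
    (hH.differentiable one_ne_zero θ).hasDerivAt
  have hUd : ∀ θ, HasDerivAt U (deriv U θ) θ := fun θ ↦
    (hU.differentiable one_ne_zero θ).hasDerivAt
  have hHc : Continuous H := hH.continuous
  have hUc : Continuous U := hU.continuous
  have hprimitive : ∀ θ, HasDerivAt
      (fun t ↦ sin t * (4 * η * (U t + 2) - 8 * H t * exp (U t / 2)))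
      ((-2 * sin θ * ((2 * H θ * exp (U θ / 2) - 2 * η) * deriv U θ) -
        4 * (cos θ * (2 * H θ * exp (U θ / 2) - 2 * η) - U θ * cos θ)) -
        2 * (4 * sin θ * deriv H θ * exp (U θ / 2) - 2 * cos θ * (η - 1) * U θ)) θ := fun θ ↦ by
    refine ((hasDerivAt_sin θ).fun_mul ((((hUd θ).add_const 2).const_mul (4 * η)).fun_sub
      (((hHd θ).const_mul 8).fun_mul ((hUd θ).div_const 2).exp))).congr_deriv ?_
    ring
  have hftc := intervalIntegral.integral_eq_sub_of_hasDerivAt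
    (fun θ (_ : θ ∈ Set.uIcc 0 (2 * π)) ↦ hprimitive θ)
    (Continuous.intervalIntegrable (by fun_prop) _ _)
  rw [intervalIntegral.integral_sub (Continuous.intervalIntegrable (by fun_prop) _ _)
    (Continuous.intervalIntegrable (by fun_prop) _ _),
    intervalIntegral.integral_sub (Continuous.intervalIntegrable (by fun_prop) _ _)
    (Continuous.intervalIntegrable (by fun_prop) _ _), intervalIntegral.integral_const_mul,
    intervalIntegral.integral_const_mul] at hftc
  simpa only [sin_two_pi, sin_zero, zero_mul, sub_zero, sub_eq_zero] using hftc

/-- The conformal vector field `F(x₁, x₂) = (1 - x₁² + x₂², -2x₁x₂)` of the disk, in complex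
notation. -/
def conformalField (z : ℂ) : ℂ := 1 - z ^ 2

lemma differentiable_conformalField : Differentiable ℂ conformalField := by
  unfold conformalField
  fun_prop

lemma deriv_conformalField (z : ℂ) : deriv conformalField z = -2 * z := by
  unfold conformalField
  simp

lemma fderiv_apply_conformalField (k : ℂ → ℝ) (z : ℂ) :
    fderiv ℝ k z (conformalField z) =
      pd k 1 z * (1 - z.re ^ 2 + z.im ^ 2) + pd k I z * (-2 * z.re * z.im) := by
  rw [← re_mul_dz]
  simp only [conformalField, dz, pow_two, Complex.mul_re, Complex.mul_im, Complex.sub_re,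
    Complex.sub_im, Complex.one_re, Complex.one_im, Complex.ofReal_re, Complex.ofReal_im,
    Complex.I_re, Complex.I_im]
  ring

lemma conj_mul_conformalField {z : ℂ} (hz : z ∈ unitCircle) :
    conj z * conformalField z = ((-2 * z.im : ℝ) : ℂ) * I := by
  have hsub : conj z - z = ((-2 * z.im : ℝ) : ℂ) * I := by
    rw [← neg_sub, Complex.sub_conj]
    push_cast
    ring
  rw [← hsub, conformalField]
  linear_combination (-z) * conj_mul_self_of_mem_unitCircle hz

lemma two_mul_integral_eq_bint_flux_sub (hk : ContDiff ℝ 1 k) (hu : ContDiff ℝ 2 u)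
    (heq : ∀ z ∈ unitDisk, -lap u z + 2 * κ = 2 * k z * exp (u z)) :
    2 * ∫ z in unitDisk, (4 * z.re * κ * u z + exp (u z) * fderiv ℝ k z (conformalField z)) =
      bint (fun z ↦ -2 * z.im * (nderiv u z * tderiv u z)) -
        4 * bint (fun z ↦ z.re * nderiv u z - u z * z.re) := by
  have htangent : ∀ z ∈ unitCircle, (conj z * conformalField z).re = 0 := fun z hz ↦ by
    rw [conj_mul_conformalField hz, Complex.re_ofReal_mul, Complex.I_re, mul_zero]
  have hweight : ∀ z ∈ unitCircle, (conj z * conformalField z).im = -2 * z.im := fun z hz ↦ by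
    rw [conj_mul_conformalField hz, Complex.im_ofReal_mul, Complex.I_im, mul_one]
  have hpohozaev := integral_lap_mul_fderiv differentiable_conformalField htangent hu
  rw [bint_congr fun z hz ↦ by rw [hweight z hz]] at hpohozaev
  have hderiv : ∀ z, (deriv conformalField z).re = -2 * z.re := fun z ↦ by
    simp [deriv_conformalField]
  calc 2 * ∫ z in unitDisk, (4 * z.re * κ * u z + exp (u z) * fderiv ℝ k z (conformalField z))
      = 2 * ∫ z in unitDisk, (exp (u z) * fderiv ℝ k z (conformalField z) -
          2 * κ * u z * (deriv conformalField z).re) := by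
        congr! 3 with z
        rw [hderiv]
        ring
    _ = (∫ z in unitDisk, lap u z * fderiv ℝ u z (conformalField z)) +
          2 * ∫ z in unitDisk, (deriv conformalField z).re * lap u z :=
        two_mul_integral_exp_mul_fderiv_sub differentiable_conformalField htangent hk hu heq
    _ = _ := by
        simp only [hpohozaev, hderiv, mul_assoc (-2 : ℝ), integral_const_mul,
          integral_re_mul_lap hu]
        ring

theorem kazdan_warner_identity_general (hk : ContDiff ℝ 1 k)
    (hh : ContDiff ℝ 1 fun θ ↦ h (bpt θ)) (hu : ContDiff ℝ 2 u)
    (heq : ∀ z ∈ unitDisk, -lap u z + 2 * κ = 2 * k z * exp (u z))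
    (hbdry : ∀ z ∈ unitCircle, nderiv u z + 2 * η = 2 * h z * exp (u z / 2)) :
    (∫ θ in (0 : ℝ)..(2 * π), (4 * sin θ * deriv (fun t ↦ h (bpt t)) θ * exp (u (bpt θ) / 2) -
      2 * cos θ * (η - 1) * u (bpt θ))) =
    ∫ z in unitDisk, (4 * z.re * κ * u z + exp (u z) *
      (pd k 1 z * (1 - z.re ^ 2 + z.im ^ 2) + pd k I z * (-2 * z.re * z.im))) := by
  have hu₁ : ContDiff ℝ 1 u := hu.of_le one_le_two
  have htderiv : ∀ θ, tderiv u (bpt θ) = deriv (fun t ↦ u (bpt t)) θ := fun θ ↦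
    (hasDerivAt_comp_bpt (hu₁.differentiable one_ne_zero _)).deriv.symm
  have hnderiv : ∀ θ, nderiv u (bpt θ) = 2 * h (bpt θ) * exp (u (bpt θ) / 2) - 2 * η := fun θ ↦
    eq_sub_of_add_eq (hbdry _ (bpt_mem_unitCircle θ))
  have hinterior := two_mul_integral_eq_bint_flux_sub hk hu heq
  simp only [bint, fderiv_apply_conformalField, htderiv, hnderiv, bpt_re, bpt_im] at hinterior
  have hboundary := integral_flux_sub_eq_two_mul_integral hh (hu₁.fun_comp contDiff_bpt) η
  exact mul_left_cancel₀ two_ne_zero (hboundary.symm.trans hinterior.symm)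

end KazdanWarner

/-- Proposition 2.4 (Kazdan–Warner type identity) for solutions of (P_ε),
with F(x₁,x₂) = (1 − x₁² + x₂², −2x₁x₂). -/
theorem kazdan_warner_identity
    (K h : ℂ → ℝ)
    (hK : ContDiff ℝ 2 K)
    (hKneg : ∀ x ∈ closedUnitDisk, K x < 0)
    (hh : ContDiff ℝ 2 (fun θ => h (bpt θ)))
    (ε : ℝ) (hε : -1 < ε)
    (u : ℂ → ℝ) (hu : IsPerturbedSolution K h ε u) :
    (∫ θ in (0:ℝ)..(2 * π),
        (4 * Real.sin θ * deriv (fun t => heps h ε (bpt t)) θ * Real.exp (u (bpt θ) / 2)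
         - 2 * Real.cos θ * (htil ε - 1) * u (bpt θ)))
    = ∫ x in unitDisk,
        (4 * x.re * Ktil ε * u x
         + Real.exp (u x) * (pd (Keps K ε) 1 x * (1 - x.re ^ 2 + x.im ^ 2)
            + pd (Keps K ε) Complex.I x * (-2 * x.re * x.im))) := by
  exact kazdan_warner_identity_general (((hK.sub contDiff_const).div_const _).of_le one_le_two)
    ((hh.div_const _).of_le one_le_two) hu.1 hu.2.1 hu.2.2

end
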